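/- arXiv:1411.5663 — 4 statements merged into one kernel-verified Lean document; each statement's English description precedes it below -/
import Mathlib

section
/- The seven explicit endomorphisms e_1,…,e_7 of ℝ^8 satisfy the Clifford relations e_i∘e_j + e_j∘e_i = −2·δ_{ij}·Id_{ℝ^8} for all 1 ≤ i, j ≤ 7, and each e_i is skew-adjoint with respect to the standard inner product: ⟨e_i(v), w⟩ = −⟨v, e_i(w)⟩ for all v, w ∈ ℝ^8. -/
open RealInnerProductSpace

noncomputable section

/-- The spin representation space Δ = ℝ^8. -/
abbrev Δ : Type := EuclideanSpace ℝ (Fin 8)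

/-- The standard skew endomorphism E_{ij} of ℝ^8: u_i ↦ u_j, u_j ↦ -u_i, others ↦ 0. -/
def E (i j : Fin 8) : Δ →ₗ[ℝ] Δ where
  toFun v := v i • EuclideanSpace.single j (1 : ℝ) - v j • EuclideanSpace.single i (1 : ℝ)
  map_add' x y := by
    simp only [PiLp.add_apply, add_smul]
    module
  map_smul' c x := by
    simp only [PiLp.smul_apply, smul_eq_mul, RingHom.id_apply, mul_smul]
    module

/-- The seven Clifford endomorphisms e_1, …, e_7 (indexed 0,…,6). -/
def cliff : Fin 7 → (Δ →ₗ[ℝ] Δ) :=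
  ![  E 0 7 + E 1 6 - E 2 5 - E 3 4,
    - E 0 6 + E 1 7 + E 2 4 - E 3 5,
    - E 0 5 + E 1 4 - E 2 7 + E 3 6,
    - E 0 4 - E 1 5 - E 2 6 - E 3 7,
    - E 0 2 - E 1 3 + E 4 6 + E 5 7,
      E 0 3 - E 1 2 - E 4 7 + E 5 6,
      E 0 1 - E 2 3 - E 4 5 + E 6 7]

/-- j = e_1 ∘ e_2 ∘ e_3 ∘ e_4 ∘ e_5 ∘ e_6. -/
def jmap : Δ →ₗ[ℝ] Δ :=
  cliff 0 ∘ₗ cliff 1 ∘ₗ cliff 2 ∘ₗ cliff 3 ∘ₗ cliff 4 ∘ₗ cliff 5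

/-- Clifford multiplication of a vector x ∈ ℝ^6 on a spinor. -/
def cm6 (x : EuclideanSpace ℝ (Fin 6)) (φ : Δ) : Δ :=
  ∑ i : Fin 6, x i • cliff i.castSucc φ

/-- Clifford multiplication of a vector x ∈ ℝ^7 on a spinor. -/
def cm7 (x : EuclideanSpace ℝ (Fin 7)) (φ : Δ) : Δ :=
  ∑ i : Fin 7, x i • cliff i φ


theorem cliff_apply_0 (v : Δ) : cliff 0 v = !₂[-v 7, -v 6, v 5, v 4, -v 3, -v 2, v 1, v 0] := by
  ext t
  fin_cases t <;> simp [cliff, E]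

theorem cliff_apply_1 (v : Δ) : cliff 1 v = !₂[v 6, -v 7, -v 4, v 5, v 2, -v 3, -v 0, v 1] := by
  ext t
  fin_cases t <;> simp [cliff, E]

theorem cliff_apply_2 (v : Δ) : cliff 2 v = !₂[v 5, -v 4, v 7, -v 6, v 1, -v 0, v 3, -v 2] := by
  ext t
  fin_cases t <;> simp [cliff, E]

theorem cliff_apply_3 (v : Δ) : cliff 3 v = !₂[v 4, v 5, v 6, v 7, -v 0, -v 1, -v 2, -v 3] := by
  ext t
  fin_cases t <;> simp [cliff, E]

theorem cliff_apply_4 (v : Δ) : cliff 4 v = !₂[v 2, v 3, -v 0, -v 1, -v 6, -v 7, v 4, v 5] := by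
  ext t
  fin_cases t <;> simp [cliff, E]

theorem cliff_apply_5 (v : Δ) : cliff 5 v = !₂[-v 3, v 2, -v 1, v 0, v 7, -v 6, v 5, -v 4] := by
  ext t
  fin_cases t <;> simp [cliff, E]

theorem cliff_apply_6 (v : Δ) : cliff 6 v = !₂[-v 1, v 0, v 3, -v 2, v 5, -v 4, -v 7, v 6] := by
  ext t
  fin_cases t <;> simp [cliff, E]

set_option maxHeartbeats 4000000 in
theorem cliff_anticomm : ∀ i j : Fin 7,
    cliff i ∘ₗ cliff j + cliff j ∘ₗ cliff i =
      (if i = j then (-2 : ℝ) else 0) • LinearMap.id := by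
  intro i j
  ext v : 1
  rw [LinearMap.add_apply, LinearMap.comp_apply, LinearMap.comp_apply]
  fin_cases i <;> fin_cases j <;>
    (simp only [Fin.zero_eta, Fin.mk_one, Fin.reduceFinMk, cliff_apply_0, cliff_apply_1, cliff_apply_2, cliff_apply_3, cliff_apply_4, cliff_apply_5, cliff_apply_6]
     ext t
     fin_cases t <;> simp <;> ring)

set_option maxHeartbeats 4000000 in
theorem cliff_skew : ∀ (i : Fin 7) (v w : Δ), ⟪cliff i v, w⟫ = -⟪v, cliff i w⟫ := by
  intro i v w
  fin_cases i <;>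
    (simp only [Fin.zero_eta, Fin.mk_one, Fin.reduceFinMk, cliff_apply_0, cliff_apply_1, cliff_apply_2, cliff_apply_3, cliff_apply_4, cliff_apply_5, cliff_apply_6]
     simp [PiLp.inner_apply, Fin.sum_univ_eight]
     ring)

/-- The endomorphisms e_1,…,e_7 satisfy the Clifford relations
`e_i ∘ e_j + e_j ∘ e_i = -2 δ_{ij} Id` and each e_i is skew-adjoint
with respect to the standard inner product on ℝ^8. -/
theorem clifford_relations_and_skew_adjoint :
    (∀ i j : Fin 7,
      cliff i ∘ₗ cliff j + cliff j ∘ₗ cliff i =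
        (if i = j then (-2 : ℝ) else 0) • LinearMap.id) ∧
    (∀ (i : Fin 7) (v w : Δ), ⟪cliff i v, w⟫ = -⟪v, cliff i w⟫) := by
  exact ⟨cliff_anticomm, cliff_skew⟩

end
end

section
/- For every unit spinor φ ∈ Δ, the eight vectors (φ, j(φ), e_1(φ), e_2(φ), e_3(φ), e_4(φ), e_5(φ), e_6(φ)) form an orthonormal basis of ℝ^8. In particular Δ decomposes as the orthogonal direct sum Δ = ℝφ ⊕ ℝ·j(φ) ⊕ {x·φ : x ∈ ℝ^6}. -/
open RealInnerProductSpace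

noncomputable section

set_option maxHeartbeats 2000000 in
theorem cliff_coords (φ : Δ) :
    cliff 0 φ = !₂[-φ 7, -φ 6, φ 5, φ 4, -φ 3, -φ 2, φ 1, φ 0] ∧
    cliff 1 φ = !₂[φ 6, -φ 7, -φ 4, φ 5, φ 2, -φ 3, -φ 0, φ 1] ∧
    cliff 2 φ = !₂[φ 5, -φ 4, φ 7, -φ 6, φ 1, -φ 0, φ 3, -φ 2] ∧
    cliff 3 φ = !₂[φ 4, φ 5, φ 6, φ 7, -φ 0, -φ 1, -φ 2, -φ 3] ∧
    cliff 4 φ = !₂[φ 2, φ 3, -φ 0, -φ 1, -φ 6, -φ 7, φ 4, φ 5] ∧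
    cliff 5 φ = !₂[-φ 3, φ 2, -φ 1, φ 0, φ 7, -φ 6, φ 5, -φ 4] := by
  refine ⟨?_, ?_, ?_, ?_, ?_, ?_⟩ <;>
  · ext i
    fin_cases i <;> simp [cliff, E]

theorem jmap_coords (φ : Δ) :
    jmap φ = !₂[φ 1, -φ 0, -φ 3, φ 2, -φ 5, φ 4, φ 7, -φ 6] := by
  simp only [jmap, LinearMap.comp_apply]
  rw [(cliff_coords φ).2.2.2.2.2, (cliff_coords _).2.2.2.2.1, (cliff_coords _).2.2.2.1,
    (cliff_coords _).2.2.1, (cliff_coords _).2.1, (cliff_coords _).1]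
  ext i
  fin_cases i <;> simp

set_option maxHeartbeats 2000000 in
/-- For every unit spinor φ, the eight vectors
(φ, j(φ), e_1(φ), …, e_6(φ)) form an orthonormal basis of ℝ^8. -/
theorem orthonormal_basis_from_unit_spinor_dim6 (φ : Δ) (hφ : ⟪φ, φ⟫ = 1) :
    Orthonormal ℝ
      ![φ, jmap φ, cliff 0 φ, cliff 1 φ, cliff 2 φ, cliff 3 φ, cliff 4 φ, cliff 5 φ] ∧
    Submodule.span ℝ
      (Set.range
        ![φ, jmap φ, cliff 0 φ, cliff 1 φ, cliff 2 φ, cliff 3 φ, cliff 4 φ, cliff 5 φ]) = ⊤ := by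
  have key : Orthonormal ℝ
      ![φ, jmap φ, cliff 0 φ, cliff 1 φ, cliff 2 φ, cliff 3 φ, cliff 4 φ, cliff 5 φ] := by
    obtain ⟨h0, h1, h2, h3, h4, h5⟩ := cliff_coords φ
    rw [h0, h1, h2, h3, h4, h5]
    rw [orthonormal_iff_ite]
    simp only [PiLp.inner_apply, Fin.sum_univ_eight, RCLike.inner_apply, conj_trivial] at hφ
    intro i j
    rw [jmap_coords φ]
    fin_cases i <;> fin_cases j <;>
      simp [PiLp.inner_apply, Fin.sum_univ_eight, -inner_self_eq_norm_sq_to_K] <;> first | linarith | ring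
  exact ⟨key, key.linearIndependent.span_eq_top_of_card_eq_finrank (by simp)⟩

end
end

section
/- (Lemma 2.1, first part.) Let φ ∈ Δ be a unit spinor. Then ψ_φ·φ = −4φ, ψ_φ·j(φ) = 4·j(φ), and ψ_φ·φ* = 0 for every spinor φ* ∈ Δ orthogonal to both φ and j(φ). -/
open RealInnerProductSpace

noncomputable section

/-- Standard basis vector of ℝ^6. -/
def v6 (i : Fin 6) : EuclideanSpace ℝ (Fin 6) := EuclideanSpace.single i (1 : ℝ)

/-- The 3-form ψ_φ(x,y,z) = -⟨x·y·z·φ, φ⟩ on ℝ^6. -/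
def psiP (φ : Δ) (x y z : EuclideanSpace ℝ (Fin 6)) : ℝ :=
  -⟪cm6 x (cm6 y (cm6 z φ)), φ⟫

/-- The 3-form ψ_φ⁻(x,y,z) = -⟨x·y·z·φ, j(φ)⟩ on ℝ^6. -/
def psiM (φ : Δ) (x y z : EuclideanSpace ℝ (Fin 6)) : ℝ :=
  -⟪cm6 x (cm6 y (cm6 z φ)), jmap φ⟫

/-- Action of a trilinear form on ℝ^6 on a spinor:
τ·χ := Σ_{i<j<k} τ(v_i,v_j,v_k) e_i(e_j(e_k(χ))). -/
def tact6 (τ : EuclideanSpace ℝ (Fin 6) → EuclideanSpace ℝ (Fin 6) →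
    EuclideanSpace ℝ (Fin 6) → ℝ) (χ : Δ) : Δ :=
  ∑ i : Fin 6, ∑ j : Fin 6, ∑ k : Fin 6,
    if i < j ∧ j < k then
      τ (v6 i) (v6 j) (v6 k) • cliff i.castSucc (cliff j.castSucc (cliff k.castSucc χ))
    else 0

/-- Action of a bilinear form on ℝ^6 on a spinor:
σ·χ := Σ_{i<j} σ(v_i,v_j) e_i(e_j(χ)). -/
def bact6 (σ : EuclideanSpace ℝ (Fin 6) → EuclideanSpace ℝ (Fin 6) → ℝ) (χ : Δ) : Δ :=
  ∑ i : Fin 6, ∑ j : Fin 6,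
    if i < j then σ (v6 i) (v6 j) • cliff i.castSucc (cliff j.castSucc χ) else 0

theorem cliff0_apply (a b c d e f g h : ℝ) :
    cliff 0 !₂[a, b, c, d, e, f, g, h] = !₂[-h, -g, f, e, -d, -c, b, a] := by
  ext k
  fin_cases k <;> simp [cliff, E]

theorem cliff1_apply (a b c d e f g h : ℝ) :
    cliff 1 !₂[a, b, c, d, e, f, g, h] = !₂[g, -h, -e, f, c, -d, -a, b] := by
  ext k
  fin_cases k <;> simp [cliff, E]

theorem cliff2_apply (a b c d e f g h : ℝ) :
    cliff 2 !₂[a, b, c, d, e, f, g, h] = !₂[f, -e, h, -g, b, -a, d, -c] := by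
  ext k
  fin_cases k <;> simp [cliff, E]

theorem cliff3_apply (a b c d e f g h : ℝ) :
    cliff 3 !₂[a, b, c, d, e, f, g, h] = !₂[e, f, g, h, -a, -b, -c, -d] := by
  ext k
  fin_cases k <;> simp [cliff, E]

theorem cliff4_apply (a b c d e f g h : ℝ) :
    cliff 4 !₂[a, b, c, d, e, f, g, h] = !₂[c, d, -a, -b, -g, -h, e, f] := by
  ext k
  fin_cases k <;> simp [cliff, E]

theorem cliff5_apply (a b c d e f g h : ℝ) :
    cliff 5 !₂[a, b, c, d, e, f, g, h] = !₂[-d, c, -b, a, h, -g, f, -e] := by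
  ext k
  fin_cases k <;> simp [cliff, E]

theorem jmap_apply (a b c d e f g h : ℝ) :
    jmap !₂[a, b, c, d, e, f, g, h] = !₂[b, -a, -d, c, -f, e, h, -g] := by
  simp only [jmap, LinearMap.comp_apply, cliff0_apply, cliff1_apply, cliff2_apply, cliff3_apply, cliff4_apply, cliff5_apply, neg_neg]

theorem cm6_v6 (i : Fin 6) (φ : Δ) : cm6 (v6 i) φ = cliff i.castSucc φ := by
  simp [cm6, v6]

theorem eq_coords (φ : Δ) : φ = !₂[φ 0, φ 1, φ 2, φ 3, φ 4, φ 5, φ 6, φ 7] := by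
  ext k
  fin_cases k <;> rfl

theorem exists_coords (φ : Δ) :
    ∃ a b c d e f g h : ℝ, φ = !₂[a, b, c, d, e, f, g, h] :=
  ⟨_, _, _, _, _, _, _, _, eq_coords φ⟩

set_option maxHeartbeats 4000000 in
theorem tact6_coords (a b c d e f g h p q r s t u v w : ℝ) :
    tact6 (psiP !₂[a, b, c, d, e, f, g, h]) !₂[p, q, r, s, t, u, v, w] =
      (-4 * ⟪!₂[p, q, r, s, t, u, v, w], !₂[a, b, c, d, e, f, g, h]⟫) • !₂[a, b, c, d, e, f, g, h]
      + (4 * ⟪!₂[p, q, r, s, t, u, v, w], jmap !₂[a, b, c, d, e, f, g, h]⟫) •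
        jmap !₂[a, b, c, d, e, f, g, h] := by
  have c0 : (Fin.castSucc 0 : Fin 7) = 0 := rfl
  have c1 : (Fin.castSucc 1 : Fin 7) = 1 := rfl
  have c2 : (Fin.castSucc 2 : Fin 7) = 2 := rfl
  have c3 : (Fin.castSucc 3 : Fin 7) = 3 := rfl
  have c4 : (Fin.castSucc 4 : Fin 7) = 4 := rfl
  have c5 : (Fin.castSucc 5 : Fin 7) = 5 := rfl
  simp only [tact6, psiP, cm6_v6, Fin.sum_univ_six]
  simp only [c0, c1, c2, c3, c4, c5, Fin.reduceLT, and_true, and_false, true_and, false_and,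
    and_self, if_true, if_false, zero_add, add_zero]
  simp only [cliff0_apply, cliff1_apply, cliff2_apply, cliff3_apply, cliff4_apply, cliff5_apply,
    jmap_apply, neg_neg]
  ext k
  fin_cases k <;>
  · simp [PiLp.inner_apply, Fin.sum_univ_eight]
    ring

theorem tact6_psiP (φ χ : Δ) :
    tact6 (psiP φ) χ = (-4 * ⟪χ, φ⟫) • φ + (4 * ⟪χ, jmap φ⟫) • jmap φ := by
  obtain ⟨a, b, c, d, e, f, g, h, rfl⟩ := exists_coords φ
  obtain ⟨p, q, r, s, t, u, v, w, rfl⟩ := exists_coords χ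
  exact tact6_coords a b c d e f g h p q r s t u v w

theorem jmap_inner (φ : Δ) : ⟪φ, jmap φ⟫ = 0 := by
  rw [eq_coords φ, jmap_apply]
  simp [PiLp.inner_apply, Fin.sum_univ_eight]
  ring

theorem jmap_norm (φ : Δ) : ⟪jmap φ, jmap φ⟫ = ⟪φ, φ⟫ := by
  rw [eq_coords φ, jmap_apply]
  simp only [PiLp.inner_apply, Fin.sum_univ_eight]
  simp
  ring

/-- Lemma 2.1, first part: ψ_φ·φ = -4φ, ψ_φ·j(φ) = 4 j(φ), and
ψ_φ·φ* = 0 for every spinor φ* orthogonal to both φ and j(φ). -/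
theorem psi_clifford_action (φ : Δ) (hφ : ⟪φ, φ⟫ = 1) :
    tact6 (psiP φ) φ = (-4 : ℝ) • φ ∧
    tact6 (psiP φ) (jmap φ) = (4 : ℝ) • jmap φ ∧
    ∀ ψ : Δ, ⟪ψ, φ⟫ = 0 → ⟪ψ, jmap φ⟫ = 0 → tact6 (psiP φ) ψ = 0 := by
  refine ⟨?_, ?_, ?_⟩
  · rw [tact6_psiP, hφ, jmap_inner]
    simp
  · rw [tact6_psiP, jmap_norm, hφ, real_inner_comm, jmap_inner]
    simp
  · intro ψ h1 h2
    simp [tact6_psiP, h1, h2]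

end
end

section
/- Let φ ∈ Δ be a unit spinor. The trilinear forms ψ_φ and ψ_φ⁻ are alternating, and for all x, y, z ∈ ℝ^6 they satisfy ψ_φ⁻(x,y,z) = ψ_φ(J_φ x, J_φ y, J_φ z) = −ψ_φ(J_φ x, y, z). -/
open RealInnerProductSpace

noncomputable section

lemma cm6_coord (x : EuclideanSpace ℝ (Fin 6)) (a : Δ) :
    cm6 x a = !₂[
      -x 0 * a 7 + x 1 * a 6 + x 2 * a 5 + x 3 * a 4 + x 4 * a 2 - x 5 * a 3,
      -x 0 * a 6 - x 1 * a 7 - x 2 * a 4 + x 3 * a 5 + x 4 * a 3 + x 5 * a 2,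
      x 0 * a 5 - x 1 * a 4 + x 2 * a 7 + x 3 * a 6 - x 4 * a 0 - x 5 * a 1,
      x 0 * a 4 + x 1 * a 5 - x 2 * a 6 + x 3 * a 7 - x 4 * a 1 + x 5 * a 0,
      -x 0 * a 3 + x 1 * a 2 + x 2 * a 1 - x 3 * a 0 - x 4 * a 6 + x 5 * a 7,
      -x 0 * a 2 - x 1 * a 3 - x 2 * a 0 - x 3 * a 1 - x 4 * a 7 - x 5 * a 6,
      x 0 * a 1 - x 1 * a 0 + x 2 * a 3 - x 3 * a 2 + x 4 * a 4 + x 5 * a 5,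
      x 0 * a 0 + x 1 * a 1 - x 2 * a 2 - x 3 * a 3 + x 4 * a 5 - x 5 * a 4] := by
  ext k
  fin_cases k <;> simp [cm6, cliff, E, Fin.sum_univ_succ] <;> ring

set_option maxHeartbeats 4000000 in
lemma jmap_coord (a : Δ) :
    jmap a = !₂[a 1, -a 0, -a 3, a 2, -a 5, a 4, a 7, -a 6] := by
  ext k
  fin_cases k <;> simp [jmap, cliff, E]

lemma inner8 (a b : Δ) : ⟪a, b⟫ = a 0 * b 0 + a 1 * b 1 + a 2 * b 2 + a 3 * b 3
    + a 4 * b 4 + a 5 * b 5 + a 6 * b 6 + a 7 * b 7 := by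
  simp [PiLp.inner_apply, Fin.sum_univ_succ]; ring

lemma cm6_skew (x : EuclideanSpace ℝ (Fin 6)) (a b : Δ) :
    ⟪cm6 x a, b⟫ = -⟪a, cm6 x b⟫ := by
  rw [inner8, inner8, cm6_coord, cm6_coord]; simp; ring

lemma jmap_skew (a b : Δ) : ⟪jmap a, b⟫ = -⟪a, jmap b⟫ := by
  rw [inner8, inner8, jmap_coord, jmap_coord]; simp; ring

lemma jmap_sq (a : Δ) : jmap (jmap a) = -a := by
  rw [jmap_coord (jmap a), jmap_coord a]; ext k; fin_cases k <;> simp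

lemma jmap_anti (x : EuclideanSpace ℝ (Fin 6)) (a : Δ) :
    jmap (cm6 x a) = -cm6 x (jmap a) := by
  rw [jmap_coord, cm6_coord x (jmap a), jmap_coord a, cm6_coord]
  ext k; fin_cases k <;> simp <;> ring

lemma cm6_cliff (x y : EuclideanSpace ℝ (Fin 6)) (a : Δ) :
    cm6 x (cm6 y a) = -cm6 y (cm6 x a) - (2 * ⟪x, y⟫) • a := by
  rw [cm6_coord x (cm6 y a), cm6_coord y (cm6 x a), cm6_coord x a, cm6_coord y a]
  ext k; fin_cases k <;> simp [PiLp.inner_apply, Fin.sum_univ_succ] <;> ring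

lemma cm6_add (x : EuclideanSpace ℝ (Fin 6)) (a b : Δ) :
    cm6 x (a + b) = cm6 x a + cm6 x b := by
  simp [cm6, Finset.sum_add_distrib]

lemma cm6_smul (x : EuclideanSpace ℝ (Fin 6)) (c : ℝ) (a : Δ) :
    cm6 x (c • a) = c • cm6 x a := by
  simp [cm6, Finset.smul_sum, smul_comm c]

lemma cm6_neg (x : EuclideanSpace ℝ (Fin 6)) (a : Δ) :
    cm6 x (-a) = -cm6 x a := by
  simp [cm6]

lemma cm6_self_inner (x : EuclideanSpace ℝ (Fin 6)) (a : Δ) : ⟪cm6 x a, a⟫ = 0 := by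
  have h := cm6_skew x a a
  rw [real_inner_comm (cm6 x a) a] at h
  linarith

lemma cm6_j_inner (x : EuclideanSpace ℝ (Fin 6)) (a : Δ) : ⟪cm6 x a, jmap a⟫ = 0 := by
  have h := cm6_skew x a (jmap a)
  have h2 := jmap_skew a (cm6 x a)
  rw [jmap_anti, inner_neg_right, real_inner_comm] at h2
  linarith

/-- Antisymmetry in the first two slots, against any test spinor orthogonal to `z·φ`. -/
lemma swap12 (φ w : Δ) (hw : ∀ v, ⟪cm6 v φ, w⟫ = 0) (x y z : EuclideanSpace ℝ (Fin 6)) :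
    ⟪cm6 x (cm6 y (cm6 z φ)), w⟫ = -⟪cm6 y (cm6 x (cm6 z φ)), w⟫ := by
  rw [cm6_cliff x y, inner_sub_left, inner_neg_left, real_inner_smul_left, hw]
  ring

/-- Antisymmetry in the last two slots. -/
lemma swap23 (φ w : Δ) (hw : ∀ v, ⟪cm6 v φ, w⟫ = 0) (x y z : EuclideanSpace ℝ (Fin 6)) :
    ⟪cm6 x (cm6 y (cm6 z φ)), w⟫ = -⟪cm6 x (cm6 z (cm6 y φ)), w⟫ := by
  rw [cm6_cliff y z, sub_eq_add_neg, ← neg_smul, cm6_add, cm6_neg, cm6_smul, inner_add_left,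
    inner_neg_left, real_inner_smul_left, hw]
  ring

lemma P12 (φ : Δ) (x y z) : psiP φ x y z = -psiP φ y x z := by
  unfold psiP; rw [swap12 φ φ (fun v => cm6_self_inner v φ)]
lemma P23 (φ : Δ) (x y z) : psiP φ x y z = -psiP φ x z y := by
  unfold psiP; rw [swap23 φ φ (fun v => cm6_self_inner v φ)]
lemma M12 (φ : Δ) (x y z) : psiM φ x y z = -psiM φ y x z := by
  unfold psiM; rw [swap12 φ _ (fun v => cm6_j_inner v φ)]
lemma M23 (φ : Δ) (x y z) : psiM φ x y z = -psiM φ x z y := by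
  unfold psiM; rw [swap23 φ _ (fun v => cm6_j_inner v φ)]

lemma psiP_eq (φ : Δ) (x y z) : psiP φ x y z = ⟪cm6 y (cm6 z φ), cm6 x φ⟫ := by
  unfold psiP; rw [cm6_skew]; ring

/-- The trilinear forms ψ_φ and ψ_φ⁻ are alternating, and
ψ_φ⁻(x,y,z) = ψ_φ(J_φ x, J_φ y, J_φ z) = -ψ_φ(J_φ x, y, z).
Here J_φ is the unique linear map with j(x·φ) = (J_φ x)·φ. -/
theorem psi_alternating_and_psiMinus (φ : Δ) (hφ : ⟪φ, φ⟫ = 1)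
    (J : EuclideanSpace ℝ (Fin 6) →ₗ[ℝ] EuclideanSpace ℝ (Fin 6))
    (hJ : ∀ x : EuclideanSpace ℝ (Fin 6), jmap (cm6 x φ) = cm6 (J x) φ) :
    (∀ x y z : EuclideanSpace ℝ (Fin 6),
      psiP φ x x z = 0 ∧ psiP φ x y y = 0 ∧ psiP φ x y x = 0) ∧
    (∀ x y z : EuclideanSpace ℝ (Fin 6),
      psiM φ x x z = 0 ∧ psiM φ x y y = 0 ∧ psiM φ x y x = 0) ∧
    (∀ x y z : EuclideanSpace ℝ (Fin 6),
      psiM φ x y z = psiP φ (J x) (J y) (J z) ∧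
      psiM φ x y z = -psiP φ (J x) y z) := by
  have hMP : ∀ x y z, psiM φ x y z = -psiP φ (J x) y z := by
    intro x y z
    rw [psiP_eq, ← hJ, jmap_anti, inner_neg_right, psiM, cm6_skew]

  have hJJ : ∀ x y z, psiP φ (J (J x)) y z = -psiP φ x y z := by
    intro x y z
    rw [psiP_eq, ← hJ, ← hJ, jmap_sq, inner_neg_right, ← psiP_eq]
  refine ⟨fun x y z => ⟨?_, ?_, ?_⟩, fun x y z => ⟨?_, ?_, ?_⟩, fun x y z => ⟨?_, hMP x y z⟩⟩
  · linarith [P12 φ x x z]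
  · linarith [P23 φ x y y]
  · linarith [P12 φ x y x, P23 φ y x x, P23 φ x y x, P12 φ x x y]
  · linarith [M12 φ x x z]
  · linarith [M23 φ x y y]
  · linarith [M12 φ x y x, M23 φ y x x]
  · linarith [hMP x (J y) (J z), M12 φ x (J y) (J z), hMP (J y) x (J z), hJJ y x (J z),
      P23 φ y x (J z), P12 φ y (J z) x, hMP z y x, M12 φ z y x, M23 φ y z x, M12 φ y x z]

end
end
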